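/- Let g(x) = ∏_{j=1}^n (x - x_j) = x^n + b_1 x^{n-1} + b_2 x^{n-2} + ... + b_n be a real polynomial, where x_1, ..., x_n are complex numbers with Re(x_j) ≤ 0 for all j, and set b_0 := 1. If 1 ≤ k < l ≤ n-1 and k and l have different parity, then b_k b_l ≥ b_{k-1} b_{l+1}. -/

import Mathlib

open Polynomial

/-!
The inequalities `c i * c l ≤ c j * c k`, for `i ≤ j, k` and `i + l = j + k`, survive multiplication
by a quadratic with nonnegative coefficients *provided* one asks for them exactly when at least one
of the gaps `j - i`, `k - i` is even: the cross terms of the two products then pair off.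
The inequality `b_{k-1} b_{l+1} ≤ b_k b_l` has gaps `1` and `l - k + 1`, and the latter is even.
A real polynomial with all roots in the closed left half-plane is a constant times a product of
factors with nonnegative coefficients: a real root `r` contributes `X - r`, and a conjugate pair
`z, z̄` contributes `X² - 2 Re(z) X + |z|²`.
-/

/-- The log-concavity inequalities of a bi-infinite sequence for which one of the gaps `j - i`,
`k - i` is even, the invariant of the induction on factors. Exchanging `j` and `k`, the even gap
may be taken to be `j - i`. -/
def IsEvenGapLogConcave {R : Type*} [Mul R] [LE R] (c : ℤ → R) : Prop :=
  ∀ ⦃i j k l : ℤ⦄, i ≤ j → i ≤ k → i + l = j + k → Even (j - i) → c i * c l ≤ c j * c k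

theorem IsEvenGapLogConcave.convolve_quadratic
    {R : Type*} [CommRing R] [PartialOrder R] [IsOrderedRing R]
    {c : ℤ → R} (hc : IsEvenGapLogConcave c) {a p q : R} (ha : 0 ≤ a) (hp : 0 ≤ p) (hq : 0 ≤ q) :
    IsEvenGapLogConcave fun m ↦ a * c (m - 2) + p * c (m - 1) + q * c m := by
  intro i j k l hij hik hsum heven
  obtain rfl | hij := hij.eq_or_lt
  · obtain rfl : l = k := by omega
    rfl
  obtain rfl | hik := hik.eq_or_lt
  · obtain rfl : l = j := by omega
    rw [mul_comm]
  have haa : c (i - 2) * c (l - 2) ≤ c (j - 2) * c (k - 2) := by apply hc <;> grind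
  have hpp : c (i - 1) * c (l - 1) ≤ c (j - 1) * c (k - 1) := by apply hc <;> grind
  have hqq : c i * c l ≤ c j * c k := by apply hc <;> grind
  have hap : c (i - 2) * c (l - 1) ≤ c (j - 2) * c (k - 1) := by apply hc <;> grind
  have hpa : c (i - 1) * c (l - 2) ≤ c (j - 1) * c (k - 2) := by apply hc <;> grind
  have hpq : c (i - 1) * c l ≤ c (j - 1) * c k := by apply hc <;> grind
  have hqp : c i * c (l - 1) ≤ c j * c (k - 1) := by apply hc <;> grind
  -- The pairing is crossed here: `c i * c (l - 2) ≤ c j * c (k - 2)` can fail when `k = i + 1`.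
  have haq : c (i - 2) * c l ≤ c j * c (k - 2) := by apply hc <;> grind
  have hqa : c i * c (l - 2) ≤ c (j - 2) * c k := by apply hc <;> grind
  linear_combination a ^ 2 * haa + p ^ 2 * hpp + q ^ 2 * hqq + a * p * (hap + hpa) +
    p * q * (hpq + hqp) + a * q * (haq + hqa)

section IntCoeff

variable {R : Type*} [Semiring R]

/-- The coefficients of a polynomial as a bi-infinite sequence, zero at negative indices, so that
multiplication by `X` is a shift. -/
def intCoeff (g : R[X]) : ℤ → R
  | .ofNat m => g.coeff m
  | .negSucc _ => 0

theorem intCoeff_natCast (g : R[X]) (m : ℕ) : intCoeff g m = g.coeff m := rfl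

theorem intCoeff_add (f g : R[X]) (m : ℤ) :
    intCoeff (f + g) m = intCoeff f m + intCoeff g m := by
  cases m <;> simp [intCoeff]

theorem intCoeff_C_mul (a : R) (g : R[X]) (m : ℤ) :
    intCoeff (C a * g) m = a * intCoeff g m := by
  cases m <;> simp [intCoeff]

theorem intCoeff_X_mul (g : R[X]) (m : ℤ) : intCoeff (X * g) m = intCoeff g (m - 1) := by
  match m with
  | .ofNat 0 => exact coeff_X_mul_zero g
  | .ofNat (n + 1) => simp [intCoeff]
  | .negSucc n => rfl

theorem intCoeff_C (a : R) (m : ℤ) : intCoeff (C a) m = if m = 0 then a else 0 := by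
  cases m <;> simp [intCoeff, coeff_C]

theorem intCoeff_quadratic_mul (a p q : R) (f : R[X]) (m : ℤ) :
    intCoeff ((C a * X ^ 2 + C p * X + C q) * f) m =
      a * intCoeff f (m - 2) + p * intCoeff f (m - 1) + q * intCoeff f m := by
  simp only [add_mul, mul_assoc, pow_two, intCoeff_add, intCoeff_C_mul, intCoeff_X_mul, sub_sub,
    one_add_one_eq_two]

end IntCoeff

theorem isEvenGapLogConcave_intCoeff_C {R : Type*} [Ring R] [LinearOrder R] [IsOrderedRing R]
    (a : R) : IsEvenGapLogConcave (intCoeff (C a)) := by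
  intro i j k l hij hik hsum _
  simp only [intCoeff_C]
  by_cases h : i = 0 ∧ l = 0
  · obtain ⟨rfl, rfl⟩ := h
    obtain ⟨rfl, rfl⟩ : j = 0 ∧ k = 0 := by omega
    rfl
  · calc
      (if i = 0 then a else 0) * (if l = 0 then a else 0) = 0 := by
        rw [ite_zero_mul_ite_zero, if_neg h]
      _ ≤ (if j = 0 then a else 0) * (if k = 0 then a else 0) := by
        split_ifs <;> simp [mul_self_nonneg]

/-- A real polynomial is weakly Hurwitz if all its complex roots lie in the closed left half-plane.
The zero polynomial is not weakly Hurwitz. -/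
def IsWeaklyHurwitz (g : ℝ[X]) : Prop :=
  ∀ z : ℂ, aeval z g = 0 → z.re ≤ 0

namespace IsWeaklyHurwitz

theorem ne_zero {g : ℝ[X]} (hg : IsWeaklyHurwitz g) : g ≠ 0 := by
  rintro rfl
  exact (hg 1 (map_zero _)).not_gt (by simp)

theorem of_dvd {f g : ℝ[X]} (hg : IsWeaklyHurwitz g) (hfg : f ∣ g) : IsWeaklyHurwitz f :=
  fun z hz ↦ hg z (aeval_eq_zero_of_dvd_aeval_eq_zero hfg hz)

theorem of_map_eq_prod_X_sub_C {ι : Type*} {s : Finset ι} {x : ι → ℂ} {g : ℝ[X]}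
    (hroots : g.map (algebraMap ℝ ℂ) = ∏ j ∈ s, (X - C (x j))) (hx : ∀ j ∈ s, (x j).re ≤ 0) :
    IsWeaklyHurwitz g := by
  intro z hz
  rw [← eval_map_algebraMap, hroots, eval_prod, Finset.prod_eq_zero_iff] at hz
  obtain ⟨j, hj, hzj⟩ := hz
  obtain rfl : z = x j := by simpa [sub_eq_zero] using hzj
  exact hx j hj

end IsWeaklyHurwitz

theorem exists_nonneg_quadratic_dvd {g : ℝ[X]} {z : ℂ} (hz : aeval z g = 0) (hre : z.re ≤ 0) :
    ∃ a p q : ℝ, 0 ≤ a ∧ 0 ≤ p ∧ 0 ≤ q ∧ 0 < (C a * X ^ 2 + C p * X + C q).natDegree ∧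
      C a * X ^ 2 + C p * X + C q ∣ g := by
  by_cases him : z.im = 0
  · obtain ⟨r, rfl⟩ : ∃ r : ℝ, (r : ℂ) = z := ⟨z.re, Complex.ext rfl him.symm⟩
    have hroot : g.IsRoot r := by
      simpa using (aeval_algebraMap_apply ℂ r g).symm.trans hz
    have hlinear : C 0 * X ^ 2 + C 1 * X + C (-r) = X - C r := by simp [sub_eq_add_neg]
    refine ⟨0, 1, -r, le_rfl, zero_le_one, by simpa using hre, ?_, ?_⟩
    · rw [hlinear, natDegree_X_sub_C]
      exact one_pos
    · rw [hlinear]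
      exact dvd_iff_isRoot.mpr hroot
  · refine ⟨1, -(2 * z.re), ‖z‖ ^ 2, zero_le_one, by linarith, by positivity, ?_, ?_⟩
    · rw [natDegree_quadratic one_ne_zero]
      exact two_pos
    · simpa [sub_eq_add_neg] using quadratic_dvd_of_aeval_eq_zero_im_ne_zero g hz him

theorem IsWeaklyHurwitz.isEvenGapLogConcave_intCoeff {g : ℝ[X]} (hg : IsWeaklyHurwitz g) :
    IsEvenGapLogConcave (intCoeff g) := by
  induction hn : g.natDegree using Nat.strong_induction_on generalizing g with
  | _ n ih =>
  obtain rfl | hpos := n.eq_zero_or_pos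
  · rw [eq_C_of_natDegree_eq_zero hn]
    exact isEvenGapLogConcave_intCoeff_C _
  obtain ⟨z, hz⟩ := IsAlgClosed.exists_aeval_eq_zero ℂ g
    (natDegree_pos_iff_degree_pos.mp (hn ▸ hpos)).ne'
  obtain ⟨a, p, q, ha, hp, hq, hdeg, f, rfl⟩ := exists_nonneg_quadratic_dvd hz (hg z hz)
  have hlt : f.natDegree < n := by
    rw [natDegree_mul (left_ne_zero_of_mul hg.ne_zero) (right_ne_zero_of_mul hg.ne_zero)] at hn
    omega
  have hf : IsEvenGapLogConcave (intCoeff f) := ih _ hlt (hg.of_dvd (dvd_mul_left _ _)) rfl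
  simpa only [← intCoeff_quadratic_mul] using hf.convolve_quadratic ha hp hq

theorem IsWeaklyHurwitz.coeff_mul_coeff_le {g : ℝ[X]} (hg : IsWeaklyHurwitz g) {i j k l : ℕ}
    (hij : i ≤ j) (hik : i ≤ k) (hsum : i + l = j + k) (heven : Even (j - i)) :
    g.coeff i * g.coeff l ≤ g.coeff j * g.coeff k := by
  simp only [← intCoeff_natCast]
  apply hg.isEvenGapLogConcave_intCoeff <;> grind

/-- **Newton-like inequalities** (Theorem 4.4).  Let
`g(x) = ∏_{j=1}^n (x - xⱼ) = xⁿ + b₁xⁿ⁻¹ + ⋯ + bₙ` be a real polynomial where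
`x₁, …, xₙ` are complex numbers with `Re(xⱼ) ≤ 0` for all `j` (and `b₀ = 1`).  If
`1 ≤ k < l ≤ n - 1` and `k`, `l` have different parity, then `b_k·b_l ≥ b_{k-1}·b_{l+1}`.
(Here `b_i` is the coefficient of `x^{n-i}` in `g`.) -/
theorem newton_like_inequalities
    (n k l : ℕ) (g : Polynomial ℝ) (x : ℕ → ℂ)
    (hdeg : g.natDegree = n)
    (hroots : g.map (algebraMap ℝ ℂ) =
      ∏ j ∈ Finset.Icc 1 n, (Polynomial.X - Polynomial.C (x j)))
    (hx : ∀ j ∈ Finset.Icc 1 n, (x j).re ≤ 0)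
    (hk : 1 ≤ k) (hkl : k < l) (hl : l ≤ n - 1) (hpar : k % 2 ≠ l % 2) :
    g.coeff (n - (k - 1)) * g.coeff (n - (l + 1)) ≤ g.coeff (n - k) * g.coeff (n - l) := by
  have hg : IsWeaklyHurwitz g := .of_map_eq_prod_X_sub_C hroots hx
  have heven : Even (n - k - (n - (l + 1))) := by grind
  rw [mul_comm]
  exact hg.coeff_mul_coeff_le (by omega) (by omega) (by omega) heven
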